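/- Let E ⊆ ℝ² be compact, ε > 0, and let x ∈ ∂E_ε be such that Π_ext(x) = {y₁, y₂} with y₁ − x = −(y₂ − x), and let ξ ∈ Ξ_ext(x). Then exactly one of the following holds: (i) (sharp type) there exist r > 0 and a connected component V of E_ε^c with x ∈ ∂V such that E_ε^c ∩ U_r(x, ξ) = V ∩ U_r(x, ξ) and V is the only connected component of E_ε^c meeting U_r(x, ξ); (ii) (chain type) there exist r > 0, a sequence (V_n) of pairwise disjoint connected components of E_ε^c contained in U_r(x, ξ) with Hausdorff distance dist_H({x}, V_n) → 0, and a sequence of singularities x_n ∈ ∂V_n with x_n → x and ⟨(y_n^{(1)} − x_n)/ε, (y_n^{(2)} − x_n)/ε⟩ → −1, where Π_ext(x_n) = {y_n^{(1)}, y_n^{(2)}}. -/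

import Mathlib

open Metric Set Filter Topology RealInnerProductSpace

noncomputable section

/-- The Euclidean plane. -/
abbrev Plane := EuclideanSpace ℝ (Fin 2)

/-- The closed ε-neighbourhood of a set `E ⊆ ℝ²`: the closure of the union of open
ε-balls centred at points of `E`. -/
def eNbhd (E : Set Plane) (ε : ℝ) : Set Plane :=
  closure (⋃ y ∈ E, ball y ε)

/-- The set of contributors of a boundary point `x ∈ ∂E_ε`: points `y ∈ ∂E` with
`‖y - x‖ = ε`. -/
def contributors (E : Set Plane) (ε : ℝ) (x : Plane) : Set Plane :=
  {y ∈ frontier E | ‖y - x‖ = ε}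

/-- The set of outward directions from `E_ε` at `x`. -/
def outwardDirs (E : Set Plane) (ε : ℝ) (x : Plane) : Set Plane :=
  {ξ | ‖ξ‖ = 1 ∧ ∃ u : ℕ → Plane, (∀ n, u n ∉ eNbhd E ε) ∧
    Tendsto u atTop (nhds x) ∧
    Tendsto (fun n => (‖u n - x‖)⁻¹ • (u n - x)) atTop (nhds ξ)}

/-- The set of extremal outward directions at `x`: outward directions perpendicular to
`y - x` for some contributor `y`. -/
def extOutward (E : Set Plane) (ε : ℝ) (x : Plane) : Set Plane :=
  {ξ ∈ outwardDirs E ε x | ∃ y ∈ contributors E ε x, ⟪y - x, ξ⟫ = 0}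

/-- The set of extremal contributors at `x`: contributors perpendicular to some
outward direction. -/
def extContrib (E : Set Plane) (ε : ℝ) (x : Plane) : Set Plane :=
  {y ∈ contributors E ε x | ∃ ξ ∈ outwardDirs E ε x, ⟪y - x, ξ⟫ = 0}

/-- The set of extremal pairs at `x`. -/
def extPairs (E : Set Plane) (ε : ℝ) (x : Plane) : Set (Plane × Plane) :=
  {p | p.1 ∈ outwardDirs E ε x ∧ p.2 ∈ contributors E ε x ∧ ⟪p.2 - x, p.1⟫ = 0}

/-- The set `Unp(E)` of boundary points of `E_ε` with a unique contributor. -/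
def unp (E : Set Plane) (ε : ℝ) : Set Plane :=
  {x ∈ frontier (eNbhd E ε) | ∃ y, contributors E ε x = {y}}

/-- A boundary point `x ∈ ∂E_ε` is smooth if `x ∈ Unp(E)` and a whole neighbourhood of
`x` on the boundary consists of points of `Unp(E)`. -/
def IsSmoothPt (E : Set Plane) (ε : ℝ) (x : Plane) : Prop :=
  x ∈ unp E ε ∧ ∃ r > 0, frontier (eNbhd E ε) ∩ ball x r ⊆ unp E ε

/-- A singularity: a non-smooth boundary point of `E_ε`. -/
def IsSingularity (E : Set Plane) (ε : ℝ) (x : Plane) : Prop :=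
  x ∈ frontier (eNbhd E ε) ∧ ¬ IsSmoothPt E ε x

/-- The open half-ball of radius `r` at `x` in direction `v`. -/
def halfBall (x v : Plane) (r : ℝ) : Set Plane :=
  {z ∈ ball x r | 0 < ⟪z - x, v⟫}

/-- `V` is a connected component of the complement of `E_ε`. -/
def IsCompOfCompl (E : Set Plane) (ε : ℝ) (V : Set Plane) : Prop :=
  ∃ z, z ∉ eNbhd E ε ∧ V = connectedComponentIn (eNbhd E ε)ᶜ z

/-- The closed geodesic arc-segment between `v, w ∈ S¹`. -/
def arcSeg (v w : Plane) : Set Plane :=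
  {u | ‖u‖ = 1 ∧ ∃ a b : ℝ, 0 ≤ a ∧ 0 ≤ b ∧ u = a • v + b • w}

/-- The open geodesic arc-segment between `v, w ∈ S¹`. -/
def openArc (v w : Plane) : Set Plane :=
  arcSeg v w \ {v, w}

/-- A chain sequence for `x`: a sequence of singularities converging to `x` whose
extremal contributors become increasingly opposed. -/
def IsChainSeq (E : Set Plane) (ε : ℝ) (x : Plane) (u : ℕ → Plane) : Prop :=
  (∀ n, IsSingularity E ε (u n)) ∧ (∀ n, u n ≠ x) ∧ Tendsto u atTop (nhds x) ∧
  ∃ y1 y2 : ℕ → Plane, (∀ n, extContrib E ε (u n) = {y1 n, y2 n}) ∧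
    Tendsto (fun n => ⟪ε⁻¹ • (y1 n - u n), ε⁻¹ • (y2 n - u n)⟫) atTop (nhds (-1))

/-- Type S1: wedge. -/
def IsWedge (E : Set Plane) (ε : ℝ) (x : Plane) : Prop :=
  IsSingularity E ε x ∧
  ∃ ξ₁ ξ₂, extOutward E ε x = {ξ₁, ξ₂} ∧ ξ₁ ≠ ξ₂ ∧ ξ₁ ≠ -ξ₂

/-- Type S2: one-sided sharp singularity. -/
def IsSharp (E : Set Plane) (ε : ℝ) (x : Plane) : Prop :=
  IsSingularity E ε x ∧ (∃ ξ, extOutward E ε x = {ξ}) ∧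
  ∃ δ > 0, IsConnected (ball x δ ∩ (eNbhd E ε)ᶜ)

/-- Type S3: sharp-sharp singularity. -/
def IsSharpSharp (E : Set Plane) (ε : ℝ) (x : Plane) : Prop :=
  IsSingularity E ε x ∧ ∃ ξ, extOutward E ε x = {ξ, -ξ} ∧
    ∀ η ∈ ({ξ, -ξ} : Set Plane), ∃ δ > 0, IsConnected (halfBall x η δ ∩ (eNbhd E ε)ᶜ)

/-- Type S4: one-sided shallow singularity. -/
def IsShallow (E : Set Plane) (ε : ℝ) (x : Plane) : Prop :=
  IsSingularity E ε x ∧ x ∈ unp E ε ∧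
  ∃ ξ₁ ξ₂, extOutward E ε x = {ξ₁, ξ₂} ∧
    (∃ δ > 0, halfBall x ξ₁ δ ∩ frontier (eNbhd E ε) ⊆ unp E ε) ∧
    (∀ δ > 0, ¬ (halfBall x ξ₂ δ ∩ frontier (eNbhd E ε) ⊆ unp E ε))

/-- Type S5: shallow-shallow singularity. -/
def IsShallowShallow (E : Set Plane) (ε : ℝ) (x : Plane) : Prop :=
  IsSingularity E ε x ∧ x ∈ unp E ε ∧
  ∃ ξ₁ ξ₂, extOutward E ε x = {ξ₁, ξ₂} ∧
    ∀ η ∈ ({ξ₁, ξ₂} : Set Plane), ∀ δ > 0,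
      ¬ (halfBall x η δ ∩ frontier (eNbhd E ε) ⊆ unp E ε)

/-- Type S6: one-sided chain singularity. -/
def IsChainSing (E : Set Plane) (ε : ℝ) (x : Plane) : Prop :=
  IsSingularity E ε x ∧ (∃ ξ, extOutward E ε x = {ξ}) ∧
  ∃ u, IsChainSeq E ε x u

/-- Type S7: chain-chain singularity. -/
def IsChainChain (E : Set Plane) (ε : ℝ) (x : Plane) : Prop :=
  IsSingularity E ε x ∧ ∃ ξ, extOutward E ε x = {ξ, -ξ} ∧
    ∀ η ∈ ({ξ, -ξ} : Set Plane), ∃ δ > 0, ∃ u,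
      IsChainSeq E ε x u ∧ ∀ n, u n ∈ halfBall x η δ

/-- Type S8: sharp-chain singularity. -/
def IsSharpChain (E : Set Plane) (ε : ℝ) (x : Plane) : Prop :=
  IsSingularity E ε x ∧ ∃ ξ, extOutward E ε x = {ξ, -ξ} ∧
    (∃ δ > 0, IsConnected (halfBall x ξ δ ∩ (eNbhd E ε)ᶜ)) ∧
    (∃ δ > 0, ∃ u, IsChainSeq E ε x u ∧ ∀ n, u n ∈ halfBall x (-ξ) δ)

/-- Sharp-type geometry in the direction `ξ` at `x`: the complement of `E_ε` meets the
half-ball `U_r(x, ξ)` in a single connected component whose boundary contains `x`. -/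
def SharpType (E : Set Plane) (ε : ℝ) (x ξ : Plane) : Prop :=
  ∃ r > 0, ∃ V, IsCompOfCompl E ε V ∧ x ∈ frontier V ∧
    (eNbhd E ε)ᶜ ∩ halfBall x ξ r = V ∩ halfBall x ξ r ∧
    ∀ W, IsCompOfCompl E ε W → (W ∩ halfBall x ξ r).Nonempty → W = V

/-- Chain-type geometry in the direction `ξ` at `x`: a sequence of pairwise disjoint
connected components of the complement contained in the half-ball `U_r(x, ξ)` converges
to `x` in Hausdorff distance, with singularities on their boundaries converging to `x`
whose extremal contributors become increasingly opposed. -/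
def ChainType (E : Set Plane) (ε : ℝ) (x ξ : Plane) : Prop :=
  ∃ r > 0, ∃ Vs : ℕ → Set Plane, ∃ u : ℕ → Plane,
    (∀ n, IsCompOfCompl E ε (Vs n)) ∧
    (Pairwise fun m n => Disjoint (Vs m) (Vs n)) ∧
    (∀ n, Vs n ⊆ halfBall x ξ r) ∧
    Tendsto (fun n => hausdorffDist {x} (Vs n)) atTop (nhds 0) ∧
    (∀ n, IsSingularity E ε (u n)) ∧ (∀ n, u n ∈ frontier (Vs n)) ∧
    Tendsto u atTop (nhds x) ∧
    ∃ y1 y2 : ℕ → Plane, (∀ n, extContrib E ε (u n) = {y1 n, y2 n}) ∧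
      Tendsto (fun n => ⟪ε⁻¹ • (y1 n - u n), ε⁻¹ • (y2 n - u n)⟫) atTop (nhds (-1))

/-! ### Basic facts -/

lemma inner_coord {ξ ζ : Plane} (hξ : ‖ξ‖ = 1) (hζ : ‖ζ‖ = 1) (h0 : ⟪ξ, ζ⟫ = 0) (v w : Plane) :
    ⟪v, w⟫ = ⟪v, ξ⟫ * ⟪w, ξ⟫ + ⟪v, ζ⟫ * ⟪w, ζ⟫ := by
  have ho : Orthonormal ℝ (![ξ, ζ] : Fin 2 → Plane) := by
    rw [orthonormal_vecCons_iff]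
    refine ⟨hξ, ?_, ?_⟩
    · intro i
      fin_cases i
      simpa using h0
    · rw [orthonormal_vecCons_iff]
      refine ⟨hζ, fun i => i.elim0, ?_⟩
      constructor
      · intro i
        exact i.elim0
      · intro i
        exact i.elim0
  have hc : Fintype.card (Fin 2) = Module.finrank ℝ Plane := by simp
  let b0 := basisOfOrthonormalOfCardEqFinrank ho hc
  have hb0 : ⇑b0 = ![ξ, ζ] := coe_basisOfOrthonormalOfCardEqFinrank ho hc
  let b := b0.toOrthonormalBasis (by rw [hb0]; exact ho)
  have hb : ⇑b = ![ξ, ζ] := by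
    rw [Module.Basis.coe_toOrthonormalBasis, hb0]
  have := b.sum_inner_mul_inner v w
  rw [hb, Fin.sum_univ_two] at this
  simp only [Matrix.cons_val_zero, Matrix.cons_val_one] at this
  rw [← this, real_inner_comm ξ w, real_inner_comm ζ w]

lemma norm_coord {ξ ζ : Plane} (hξ : ‖ξ‖ = 1) (hζ : ‖ζ‖ = 1) (h0 : ⟪ξ, ζ⟫ = 0) (v : Plane) :
    ‖v‖ ^ 2 = ⟪v, ξ⟫ ^ 2 + ⟪v, ζ⟫ ^ 2 := by
  rw [← real_inner_self_eq_norm_sq, inner_coord hξ hζ h0]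
  ring

lemma ext_coord {ξ ζ : Plane} (hξ : ‖ξ‖ = 1) (hζ : ‖ζ‖ = 1) (h0 : ⟪ξ, ζ⟫ = 0) {v w : Plane}
    (h1 : ⟪v, ξ⟫ = ⟪w, ξ⟫) (h2 : ⟪v, ζ⟫ = ⟪w, ζ⟫) : v = w := by
  have h := norm_coord hξ hζ h0 (v - w)
  rw [inner_sub_left, inner_sub_left, h1, h2] at h
  have : ‖v - w‖ = 0 := by
    have : ‖v - w‖ ^ 2 = 0 := by rw [h]; ring
    exact pow_eq_zero_iff (two_ne_zero) |>.1 this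
  exact sub_eq_zero.1 (norm_eq_zero.1 this)

lemma notMem_eNbhd {E : Set Plane} (hE : IsCompact E) {ε : ℝ} (hε : 0 < ε) {z : Plane} :
    z ∉ eNbhd E ε ↔ ∀ y ∈ E, ε < ‖y - z‖ := by
  unfold eNbhd
  rw [← Metric.thickening_eq_biUnion_ball, closure_thickening hε,
    hE.cthickening_eq_biUnion_closedBall hε.le]
  simp only [mem_iUnion, mem_closedBall, not_exists, not_le, exists_prop, not_and]
  simp only [dist_comm z, dist_eq_norm]

lemma le_of_frontier {E : Set Plane} {ε : ℝ} {x : Plane}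
    (hx : x ∈ frontier (eNbhd E ε)) : ∀ y ∈ E, ε ≤ ‖y - x‖ := by
  intro y hy
  by_contra h
  push Not at h
  apply hx.2
  apply interior_mono (s := ⋃ y ∈ E, ball y ε) subset_closure
  rw [(isOpen_biUnion fun _ _ => isOpen_ball).interior_eq]
  simp only [mem_iUnion]
  exact ⟨y, hy, by rw [mem_ball, dist_comm, dist_eq_norm]; exact h⟩

lemma isOpen_compl_eNbhd (E : Set Plane) (ε : ℝ) : IsOpen (eNbhd E ε)ᶜ :=
  isClosed_closure.isOpen_compl

lemma mem_contributors {E : Set Plane} (hE : IsCompact E) {ε : ℝ} (hε : 0 < ε) {x : Plane}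
    (hx : x ∈ frontier (eNbhd E ε)) {y : Plane} :
    y ∈ contributors E ε x ↔ y ∈ E ∧ ‖y - x‖ = ε := by
  constructor
  · rintro ⟨h1, h2⟩
    exact ⟨hE.isClosed.frontier_subset h1, h2⟩
  · rintro ⟨h1, h2⟩
    refine ⟨⟨subset_closure h1, fun hi => ?_⟩, h2⟩
    have hc : y ∈ closure (ball x ε) := by
      rw [closure_ball x hε.ne', mem_closedBall, dist_eq_norm]
      exact h2.le
    obtain ⟨z, hz1, hz2⟩ := mem_closure_iff.1 hc _ isOpen_interior hi
    have := le_of_frontier hx z (interior_subset hz1)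
    rw [mem_ball, dist_eq_norm] at hz2
    linarith

lemma isCompact_contributors {E : Set Plane} (hE : IsCompact E) (ε : ℝ) (x : Plane) :
    IsCompact (contributors E ε x) := by
  have : contributors E ε x = frontier E ∩ {y | ‖y - x‖ = ε} := rfl
  rw [this]
  apply IsCompact.inter_right
  · exact hE.of_isClosed_subset isClosed_frontier hE.isClosed.frontier_subset
  · exact isClosed_eq (by fun_prop) continuous_const

/-- Outward directions lie in the polar cone of the contributors. -/
lemma polar_of_outward {E : Set Plane} (hE : IsCompact E) {ε : ℝ} (hε : 0 < ε) {x : Plane}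
    {η : Plane} (hη : η ∈ outwardDirs E ε x) {y : Plane} (hy : y ∈ contributors E ε x) :
    ⟪y - x, η⟫ ≤ 0 := by
  obtain ⟨-, u, hu, hux, hud⟩ := hη
  have hyE : y ∈ E := hE.isClosed.frontier_subset hy.1
  have h1 : Tendsto (fun n => ⟪y - x, (‖u n - x‖)⁻¹ • (u n - x)⟫ - ‖u n - x‖ / 2) atTop
      (nhds (⟪y - x, η⟫ - ‖x - x‖ / 2)) := by
    apply Tendsto.sub
    · exact Tendsto.inner tendsto_const_nhds hud
    · exact ((hux.sub_const x).norm).div_const 2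
  rw [sub_self, norm_zero, zero_div, sub_zero] at h1
  apply le_of_tendsto' h1
  intro n
  have h2 := (notMem_eNbhd hE hε).1 (hu n) y hyE
  have h3 : ‖y - u n‖ ^ 2 = ‖y - x‖ ^ 2 - 2 * ⟪y - x, u n - x⟫ + ‖u n - x‖ ^ 2 := by
    rw [← norm_sub_sq_real]
    congr 2
    abel
  have h4 : ε ^ 2 < ‖y - u n‖ ^ 2 := by gcongr
  rw [h3, hy.2] at h4
  have hpos : 0 < ‖u n - x‖ := by
    rw [norm_pos_iff]
    intro h0
    rw [h0] at h4
    simp at h4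
  rw [inner_smul_right]
  have h5 : ⟪y - x, u n - x⟫ ≤ ‖u n - x‖ * (‖u n - x‖ / 2) := by nlinarith
  have := (inv_mul_le_iff₀ hpos).2 h5
  linarith

/-- Directions in the open polar cone of the contributors leave `E_ε` immediately. -/
lemma strict_polar {E : Set Plane} (hE : IsCompact E) {ε : ℝ} (hε : 0 < ε) {x : Plane}
    (hx : x ∈ frontier (eNbhd E ε)) {v : Plane}
    (hv : ∀ y ∈ contributors E ε x, ⟪y - x, v⟫ < 0) :
    ∃ δ₀ : ℝ, 0 < δ₀ ∧ ∀ δ : ℝ, 0 < δ → δ < δ₀ → x + δ • v ∉ eNbhd E ε := by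
  -- the part of `E` on the nonnegative side
  have hK : IsCompact (E ∩ {y | 0 ≤ ⟪y - x, v⟫}) :=
    hE.inter_right (isClosed_le continuous_const (by fun_prop))
  have key : ∃ m > ε, ∀ y ∈ E ∩ {y | 0 ≤ ⟪y - x, v⟫}, m ≤ ‖y - x‖ := by
    rcases (E ∩ {y | 0 ≤ ⟪y - x, v⟫}).eq_empty_or_nonempty with h | h
    · exact ⟨ε + 1, by linarith, by simp [h]⟩
    · obtain ⟨y0, hy0, hmin⟩ := hK.exists_isMinOn h
        (f := fun y => ‖y - x‖) (by fun_prop)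
      refine ⟨‖y0 - x‖, ?_, fun y hy => hmin hy⟩
      rcases (le_of_frontier hx y0 hy0.1).lt_or_eq with h1 | h1
      · exact h1
      · exfalso
        have := hv y0 ((mem_contributors hE hε hx).2 ⟨hy0.1, h1.symm⟩)
        have h2 : 0 ≤ ⟪y0 - x, v⟫ := hy0.2
        linarith
  obtain ⟨m, hm, hmK⟩ := key
  refine ⟨(m - ε) / (‖v‖ + 1), by have := norm_nonneg v; apply div_pos <;> linarith, ?_⟩
  intro δ hδ hδ'
  rw [notMem_eNbhd hE hε]
  intro y hy
  have hnn := norm_nonneg v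
  by_cases hy0 : 0 ≤ ⟪y - x, v⟫
  · have h1 := hmK y ⟨hy, hy0⟩
    rw [lt_div_iff₀ (by linarith)] at hδ'
    have h2 : ‖y - x‖ ≤ ‖y - (x + δ • v)‖ + ‖δ • v‖ := by
      have h := norm_add_le (y - (x + δ • v)) (δ • v)
      have e : y - (x + δ • v) + δ • v = y - x := by abel
      rwa [e] at h
    rw [norm_smul, Real.norm_of_nonneg hδ.le] at h2
    nlinarith
  · push Not at hy0
    have h1 := le_of_frontier hx y hy
    have h3 : ‖y - (x + δ • v)‖ ^ 2 = ‖y - x‖ ^ 2 - 2 * ⟪y - x, δ • v⟫ + ‖δ • v‖ ^ 2 := by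
      rw [← norm_sub_sq_real]
      congr 2
      abel
    rw [inner_smul_right] at h3
    have h4 : ε ^ 2 < ‖y - (x + δ • v)‖ ^ 2 := by
      rw [h3]
      nlinarith [mul_pos hδ (neg_pos.2 hy0), sq_nonneg ‖δ • v‖]
    exact lt_of_pow_lt_pow_left₀ 2 (norm_nonneg _) h4

/-- Limits of strictly polar directions are outward directions. -/
lemma outward_of_limit {E : Set Plane} (hE : IsCompact E) {ε : ℝ} (hε : 0 < ε) {x : Plane}
    (hx : x ∈ frontier (eNbhd E ε)) {v : Plane} (hv0 : v ≠ 0) {w : ℕ → Plane}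
    (hw : Tendsto w atTop (nhds v))
    (hv : ∀ n, ∀ y ∈ contributors E ε x, ⟪y - x, w n⟫ < 0) :
    (‖v‖)⁻¹ • v ∈ outwardDirs E ε x := by
  have h1 : ∀ n : ℕ, ∃ δ : ℝ, 0 < δ ∧ δ < 1 / ((n : ℝ) + 1) ∧ x + δ • w n ∉ eNbhd E ε := by
    intro n
    obtain ⟨δ₀, hδ₀, h⟩ := strict_polar hE hε hx (hv n)
    have hn : (0 : ℝ) < 1 / ((n : ℝ) + 1) := Nat.one_div_pos_of_nat
    have hpos := lt_min hδ₀ hn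
    refine ⟨min δ₀ (1 / ((n : ℝ) + 1)) / 2, by linarith, ?_, h _ (by linarith) ?_⟩
    · have := min_le_right δ₀ (1 / ((n : ℝ) + 1)); linarith
    · have := min_le_left δ₀ (1 / ((n : ℝ) + 1)); linarith
  choose δ hδ hδn hδU using h1
  have hδ0 : Tendsto δ atTop (nhds 0) :=
    squeeze_zero (fun n => (hδ n).le) (fun n => (hδn n).le) tendsto_one_div_add_atTop_nhds_zero_nat
  refine ⟨norm_smul_inv_norm hv0, fun n => x + δ n • w n, hδU, ?_, ?_⟩
  · have := (hδ0.smul hw).const_add x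
    simpa using this
  · have h2 : ∀ n, (‖x + δ n • w n - x‖)⁻¹ • (x + δ n • w n - x) = (‖w n‖)⁻¹ • w n := by
      intro n
      rw [add_sub_cancel_left, norm_smul, Real.norm_of_nonneg (hδ n).le, smul_smul, mul_inv,
        mul_right_comm, inv_mul_cancel₀ (hδ n).ne', one_mul]
    simp only [h2]
    exact (hw.norm.inv₀ (norm_ne_zero_iff.2 hv0)).smul hw

/-- A sequence of complement points approaching `x` yields an outward direction. -/
lemma exists_outward {E : Set Plane} {ε : ℝ} {x e : Plane}
    (z : ℕ → Plane) (hz : ∀ n, z n ∉ eNbhd E ε) (hzx : ∀ n, z n ≠ x)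
    (hlim : Tendsto z atTop (nhds x)) (he : ∀ n, ⟪z n - x, e⟫ ≤ 0) :
    ∃ η ∈ outwardDirs E ε x, ⟪η, e⟫ ≤ 0 := by
  have hs : ∀ n, (‖z n - x‖)⁻¹ • (z n - x) ∈ sphere (0 : Plane) 1 := by
    intro n
    rw [mem_sphere_zero_iff_norm]
    exact norm_smul_inv_norm (sub_ne_zero.2 (hzx n))
  obtain ⟨η, hη, φ, hφ, hlim'⟩ := (isCompact_sphere (0 : Plane) 1).tendsto_subseq hs
  refine ⟨η, ⟨by simpa using hη, z ∘ φ, fun n => hz _, hlim.comp hφ.tendsto_atTop, hlim'⟩, ?_⟩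
  have : Tendsto (fun n => ⟪(‖z (φ n) - x‖)⁻¹ • (z (φ n) - x), e⟫) atTop (nhds ⟪η, e⟫) :=
    Tendsto.inner hlim' tendsto_const_nhds
  apply le_of_tendsto' this
  intro n
  rw [real_inner_smul_left]
  exact mul_nonpos_of_nonneg_of_nonpos (by positivity) (he _)

/-- Existence and uniqueness of an upper extremal contributor. -/
lemma upper_ext {E : Set Plane} (hE : IsCompact E) {ε : ℝ} (hε : 0 < ε) {u : Plane}
    (hu : u ∈ frontier (eNbhd E ε)) {ξ ζ : Plane} (hξ : ‖ξ‖ = 1) (hζ : ‖ζ‖ = 1)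
    (h0 : ⟪ξ, ζ⟫ = 0) {c : ℝ} (hc : 0 < c)
    (hq : ∀ y ∈ contributors E ε u, c ≤ |⟪y - u, ζ⟫|)
    (hup : ∃ y ∈ contributors E ε u, 0 < ⟪y - u, ζ⟫)
    (hlo : ∃ y ∈ contributors E ε u, ⟪y - u, ζ⟫ < 0)
    (hout : ∃ η ∈ outwardDirs E ε u, ⟪η, ξ⟫ ≤ 0) :
    ∃ a ∈ extContrib E ε u, 0 < ⟪a - u, ζ⟫ ∧
      ∀ y ∈ extContrib E ε u, 0 < ⟪y - u, ζ⟫ → y = a := by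
  have hco := fun v w : Plane => inner_coord hξ hζ h0 v w
  have hA : IsCompact (contributors E ε u ∩ {y | c ≤ ⟪y - u, ζ⟫}) :=
    (isCompact_contributors hE ε u).inter_right (isClosed_le continuous_const (by fun_prop))
  have hB : IsCompact (contributors E ε u ∩ {y | ⟪y - u, ζ⟫ ≤ -c}) :=
    (isCompact_contributors hE ε u).inter_right (isClosed_le (by fun_prop) continuous_const)
  have memA : ∀ y ∈ contributors E ε u, 0 < ⟪y - u, ζ⟫ → c ≤ ⟪y - u, ζ⟫ := by
    intro y hy h
    have := hq y hy
    rwa [abs_of_pos h] at this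
  have memB : ∀ y ∈ contributors E ε u, ⟪y - u, ζ⟫ < 0 → ⟪y - u, ζ⟫ ≤ -c := by
    intro y hy h
    have := hq y hy
    rw [abs_of_neg h] at this
    linarith
  have hne : ∀ y ∈ contributors E ε u, ⟪y - u, ζ⟫ ≠ 0 := by
    intro y hy h
    have := hq y hy
    rw [h, abs_zero] at this
    linarith
  let f : Plane → ℝ := fun y => -⟪y - u, ξ⟫ / ⟪y - u, ζ⟫
  have hf : ∀ y, ⟪y - u, ζ⟫ ≠ 0 → ⟪y - u, ξ⟫ + f y * ⟪y - u, ζ⟫ = 0 := by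
    intro y hy
    simp only [f]
    field_simp
    ring
  obtain ⟨a, ⟨haC, haq⟩, hamax⟩ := hA.exists_isMaxOn
    (by obtain ⟨y, hy, h⟩ := hup; exact ⟨y, hy, memA y hy h⟩) (f := f) (by
      apply ContinuousOn.div (by fun_prop) (by fun_prop)
      intro y hy
      exact hne y hy.1)
  obtain ⟨b, ⟨hbC, hbq⟩, hbmin⟩ := hB.exists_isMinOn
    (by obtain ⟨y, hy, h⟩ := hlo; exact ⟨y, hy, memB y hy h⟩) (f := f) (by
      apply ContinuousOn.div (by fun_prop) (by fun_prop)
      intro y hy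
      exact hne y hy.1)
  change c ≤ ⟪a - u, ζ⟫ at haq
  change ⟪b - u, ζ⟫ ≤ -c at hbq
  have haq0 : 0 < ⟪a - u, ζ⟫ := by linarith
  have hbq0 : ⟪b - u, ζ⟫ < 0 := by linarith
  have hfa := hf a haq0.ne'
  have hfb := hf b hbq0.ne
  -- no outward direction is vertical
  have hP : ∀ η ∈ outwardDirs E ε u, ⟪η, ξ⟫ ≠ 0 := by
    intro η hη hz
    have h1 := polar_of_outward hE hε hη haC
    have h2 := polar_of_outward hE hε hη hbC
    rw [hco, hz] at h1 h2
    have h3 : ⟪η, ζ⟫ = 0 := by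
      apply le_antisymm
      · by_contra h; push Not at h; nlinarith
      · by_contra h; push Not at h; nlinarith
    have := norm_coord hξ hζ h0 η
    rw [hz, h3, hη.1] at this
    norm_num at this
  have hslope : ∀ η ∈ outwardDirs E ε u, ∃ m, ∀ y, ⟪y - u, η⟫ =
      ⟪η, ξ⟫ * (⟪y - u, ξ⟫ + m * ⟪y - u, ζ⟫) := by
    intro η hη
    refine ⟨⟪η, ζ⟫ / ⟪η, ξ⟫, fun y => ?_⟩
    rw [hco]
    have := hP η hη
    field_simp
  obtain ⟨η, hη, hηξ⟩ := hout
  have hηneg : ⟪η, ξ⟫ < 0 := lt_of_le_of_ne hηξ (hP η hη)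
  obtain ⟨m, hm⟩ := hslope η hη
  have hma : f a ≤ m := by
    have := polar_of_outward hE hε hη haC
    rw [hm] at this
    have h1 : 0 ≤ ⟪a - u, ξ⟫ + m * ⟪a - u, ζ⟫ := by
      by_contra h; push Not at h; nlinarith
    by_contra h; push Not at h; nlinarith
  have hmb : m ≤ f b := by
    have := polar_of_outward hE hε hη hbC
    rw [hm] at this
    have h1 : 0 ≤ ⟪b - u, ξ⟫ + m * ⟪b - u, ζ⟫ := by
      by_contra h; push Not at h; nlinarith
    by_contra h; push Not at h; nlinarith
  refine ⟨a, ⟨haC, ?_⟩, haq0, ?_⟩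
  · rcases (hma.trans hmb).lt_or_eq with hlt | heq
    · -- nondegenerate wedge
      have hv0 : -(ξ + f a • ζ) ≠ 0 := by
        intro h
        have : ⟪-(ξ + f a • ζ), ξ⟫ = 0 := by rw [h, inner_zero_left]
        rw [inner_neg_left, inner_add_left, real_inner_smul_left,
          real_inner_comm ξ ζ, h0, real_inner_self_eq_norm_sq,
          hξ] at this
        norm_num at this
      refine ⟨_, outward_of_limit hE hε hu hv0
        (w := fun n : ℕ => -(ξ + (f a + (f b - f a) / 2 * (1 / ((n : ℝ) + 1))) • ζ)) ?_ ?_, ?_⟩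
      · have h1 := (tendsto_one_div_add_atTop_nhds_zero_nat (𝕜 := ℝ)).const_mul ((f b - f a) / 2)
        have h2 := (((h1.const_add (f a)).smul_const ζ).const_add ξ).neg
        simpa using h2
      · intro n y hy
        have hn0 : (0 : ℝ) < 1 / ((n : ℝ) + 1) := Nat.one_div_pos_of_nat
        have hn1 : 1 / ((n : ℝ) + 1) ≤ 1 := by
          rw [div_le_one (by positivity)]
          have : (0 : ℝ) ≤ n := n.cast_nonneg
          linarith
        set t := 1 / ((n : ℝ) + 1)
        rw [inner_neg_right, inner_add_right, real_inner_smul_right]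
        have hfy := hf y (hne y hy)
        rcases lt_or_gt_of_ne (hne y hy) with h | h
        · have h1 : f b ≤ f y := hbmin ⟨hy, memB y hy h⟩
          have h2 : f a + (f b - f a) / 2 * t < f y := by nlinarith
          nlinarith
        · have h1 : f y ≤ f a := hamax ⟨hy, memA y hy h⟩
          have h2 : f y < f a + (f b - f a) / 2 * t := by nlinarith
          nlinarith
      · rw [real_inner_smul_right, inner_neg_right, inner_add_right, real_inner_smul_right, hfa]
        simp
    · refine ⟨η, hη, ?_⟩
      have : m = f a := by linarith
      rw [hm, this, hfa, mul_zero]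
  · rintro y ⟨hy, η', hη', hperp⟩ hyq
    obtain ⟨m', hm'⟩ := hslope η' hη'
    have hfy := hf y hyq.ne'
    have hya : f y ≤ f a := hamax ⟨hy, memA y hy hyq⟩
    rw [hm'] at hperp
    have h1 := (mul_eq_zero.1 hperp).resolve_left (hP η' hη')
    have hm'y : m' = f y := by
      have : (m' - f y) * ⟪y - u, ζ⟫ = 0 := by linarith
      have := (mul_eq_zero.1 this).resolve_right hyq.ne'
      linarith
    have heq : f y = f a := by
      apply le_antisymm hya
      rcases lt_or_gt_of_ne (hP η' hη') with h | h
      · have h2 := polar_of_outward hE hε hη' haC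
        rw [hm', hm'y] at h2
        have h3 : 0 ≤ ⟪a - u, ξ⟫ + f y * ⟪a - u, ζ⟫ := by
          by_contra h; push Not at h; nlinarith
        by_contra h; push Not at h; nlinarith
      · have h2 := polar_of_outward hE hε hη' hbC
        rw [hm', hm'y] at h2
        have h3 : ⟪b - u, ξ⟫ + f y * ⟪b - u, ζ⟫ ≤ 0 := by
          by_contra h; push Not at h; nlinarith
        have h4 : f b ≤ f y := by
          by_contra h; push Not at h; nlinarith
        linarith
    have n1 := norm_coord hξ hζ h0 (y - u)
    have n2 := norm_coord hξ hζ h0 (a - u)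
    rw [hy.2] at n1
    rw [haC.2] at n2
    rw [heq] at hfy
    have e1 : ⟪y - u, ξ⟫ = -(f a * ⟪y - u, ζ⟫) := by linarith
    have e2 : ⟪a - u, ξ⟫ = -(f a * ⟪a - u, ζ⟫) := by linarith
    have hqq : ⟪y - u, ζ⟫ = ⟪a - u, ζ⟫ := by
      rw [e1] at n1
      rw [e2] at n2
      have h5 : (1 + f a ^ 2) * (⟪y - u, ζ⟫ ^ 2 - ⟪a - u, ζ⟫ ^ 2) = 0 := by linarith
      have h6 := (mul_eq_zero.1 h5).resolve_left (by positivity)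
      exact (sq_eq_sq₀ hyq.le haq0.le).1 (by linarith)
    have := ext_coord hξ hζ h0 (v := y - u) (w := a - u) (by rw [e1, e2, hqq]) hqq
    exact sub_left_injective this

/-- The local configuration at `x`. -/
structure LocalSetup (E : Set Plane) (ε : ℝ) (x ξ ζ : Plane) : Prop where
  hE : IsCompact E
  hε : 0 < ε
  hx : x ∈ frontier (eNbhd E ε)
  hξ : ‖ξ‖ = 1
  hζ : ‖ζ‖ = 1
  h0 : ⟪ξ, ζ⟫ = 0
  hp : x + ε • ζ ∈ E
  hm : x - ε • ζ ∈ E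
  hout : ξ ∈ outwardDirs E ε x

/-- Projection of the complement near `x` to the `ξ` axis. -/
def projT (E : Set Plane) (ε : ℝ) (x ξ ζ : Plane) : Set ℝ :=
  {τ | ∃ z, z ∉ eNbhd E ε ∧ ⟪z - x, ξ⟫ = τ ∧ |⟪z - x, ζ⟫| < ε}

/-- A box-like part of the complement over the interval `(a, b)`. -/
def boxW (E : Set Plane) (ε : ℝ) (x ξ ζ : Plane) (a b : ℝ) : Set Plane :=
  {z | z ∉ eNbhd E ε ∧ (a < ⟪z - x, ξ⟫ ∧ ⟪z - x, ξ⟫ < b) ∧ |⟪z - x, ζ⟫| < ε}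

/-- A radius below which contributors are almost vertical. -/
def GoodRad (E : Set Plane) (ε : ℝ) (x ξ ζ : Plane) (η r : ℝ) : Prop :=
  0 < r ∧ r ≤ η ∧ r ≤ ε / 4 ∧ ∀ z : Plane, 0 < ⟪z - x, ξ⟫ → ⟪z - x, ξ⟫ < r →
    ε * |⟪z - x, ζ⟫| ≤ ⟪z - x, ξ⟫ ^ 2 → ∀ y ∈ E, ‖y - z‖ ≤ ε → |⟪y - z, ξ⟫| ≤ η

namespace LocalSetup

variable {E : Set Plane} {ε : ℝ} {x ξ ζ : Plane}

lemma cusp (h : LocalSetup E ε x ξ ζ) {z : Plane} (hz : z ∉ eNbhd E ε)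
    (hs : |⟪z - x, ζ⟫| ≤ ε) : ε * |⟪z - x, ζ⟫| < ⟪z - x, ξ⟫ ^ 2 := by
  have hU := (notMem_eNbhd h.hE h.hε).1 hz
  have hε := h.hε
  have key : ∀ σ : ℝ, x + σ • ζ ∈ E → ε ^ 2 < ⟪z - x, ξ⟫ ^ 2 + (σ - ⟪z - x, ζ⟫) ^ 2 := by
    intro σ hσ
    have h1 := hU _ hσ
    have h2 := norm_coord h.hξ h.hζ h.h0 (x + σ • ζ - z)
    have e : x + σ • ζ - z = σ • ζ - (z - x) := by abel
    have h3 : ε ^ 2 < ‖x + σ • ζ - z‖ ^ 2 := by gcongr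
    rw [h2, e, inner_sub_left (σ • ζ) (z - x) ξ, inner_sub_left (σ • ζ) (z - x) ζ,
      real_inner_smul_left, real_inner_smul_left,
      real_inner_comm ξ ζ, h.h0, real_inner_self_eq_norm_sq, h.hζ] at h3
    nlinarith
  have k1 := key ε h.hp
  have k2 := key (-ε) (by rw [neg_smul, ← sub_eq_add_neg]; exact h.hm)
  have hsq : |⟪z - x, ζ⟫| ^ 2 = ⟪z - x, ζ⟫ ^ 2 := sq_abs _
  have habs := abs_nonneg ⟪z - x, ζ⟫
  rcases abs_choice ⟪z - x, ζ⟫ with hc | hc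
  · rw [hc] at hs habs ⊢
    nlinarith
  · rw [hc] at hs habs ⊢
    nlinarith

lemma abs_lt_of_cusp (h : LocalSetup E ε x ξ ζ) {z : Plane}
    (hz : ε * |⟪z - x, ζ⟫| ≤ ⟪z - x, ξ⟫ ^ 2) (h1 : 0 ≤ ⟪z - x, ξ⟫) (h2 : ⟪z - x, ξ⟫ < ε) :
    |⟪z - x, ζ⟫| ≤ ⟪z - x, ξ⟫ := by
  have hε := h.hε
  have habs := abs_nonneg ⟪z - x, ζ⟫
  by_contra hc
  push Not at hc
  nlinarith

lemma norm_le_of_cusp (h : LocalSetup E ε x ξ ζ) {z : Plane}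
    (hz : ε * |⟪z - x, ζ⟫| ≤ ⟪z - x, ξ⟫ ^ 2) (h1 : 0 ≤ ⟪z - x, ξ⟫) (h2 : ⟪z - x, ξ⟫ < ε) :
    ‖z - x‖ ≤ 2 * ⟪z - x, ξ⟫ := by
  have h3 := h.abs_lt_of_cusp hz h1 h2
  have h4 := norm_coord h.hξ h.hζ h.h0 (z - x)
  have h5 : ⟪z - x, ζ⟫ ^ 2 ≤ ⟪z - x, ξ⟫ ^ 2 := by
    rw [← sq_abs ⟪z - x, ζ⟫]
    gcongr
  apply le_of_sq_le_sq _ (by linarith)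
  nlinarith

lemma exists_goodRad (h : LocalSetup E ε x ξ ζ) {η : ℝ} (hη : 0 < η) :
    ∃ r, GoodRad E ε x ξ ζ η r := by
  have hε := h.hε
  have hK : IsCompact (E ∩ {y | η / 2 ≤ ⟪y - x, ξ⟫}) :=
    h.hE.inter_right (isClosed_le continuous_const (by fun_prop))
  have key : ∃ m > ε, ∀ y ∈ E ∩ {y | η / 2 ≤ ⟪y - x, ξ⟫}, m ≤ ‖y - x‖ := by
    rcases (E ∩ {y | η / 2 ≤ ⟪y - x, ξ⟫}).eq_empty_or_nonempty with he | he
    · exact ⟨ε + 1, by linarith, by simp [he]⟩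
    · obtain ⟨y0, hy0, hmin⟩ := hK.exists_isMinOn he
        (f := fun y => ‖y - x‖) (by fun_prop)
      refine ⟨‖y0 - x‖, ?_, fun y hy => hmin hy⟩
      rcases (le_of_frontier h.hx y0 hy0.1).lt_or_eq with h1 | h1
      · exact h1
      · exfalso
        have := polar_of_outward h.hE h.hε h.hout
          ((mem_contributors h.hE h.hε h.hx).2 ⟨hy0.1, h1.symm⟩)
        have h2 : η / 2 ≤ ⟪y0 - x, ξ⟫ := hy0.2
        linarith
  obtain ⟨m, hm, hmK⟩ := key
  refine ⟨min (min (η / 4) (ε / 4)) ((m - ε) / 2), ?_, ?_, ?_, ?_⟩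
  · have : 0 < m - ε := by linarith
    positivity
  · exact (min_le_left _ _).trans ((min_le_left _ _).trans (by linarith))
  · exact (min_le_left _ _).trans (min_le_right _ _)
  · intro z hz0 hzr hzs y hy hyz
    rw [lt_min_iff, lt_min_iff] at hzr
    obtain ⟨⟨hr1, hr2⟩, hr3⟩ := hzr
    have hn := h.norm_le_of_cusp hzs hz0.le (by linarith)
    have hyx : ‖y - x‖ ≤ ‖y - z‖ + ‖z - x‖ := norm_sub_le_norm_sub_add_norm_sub _ _ _
    have hp : ⟪y - x, ξ⟫ < η / 2 := by
      by_contra hc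
      push Not at hc
      have := hmK y ⟨hy, hc⟩
      linarith
    have e : y - z = (y - x) - (z - x) := by abel
    have hge := le_of_frontier h.hx y hy
    have hexp : ‖y - z‖ ^ 2 = ‖y - x‖ ^ 2 - 2 * ⟪y - x, z - x⟫ + ‖z - x‖ ^ 2 := by
      rw [← norm_sub_sq_real, e]
    have hin : 0 ≤ ⟪y - x, z - x⟫ := by
      nlinarith [norm_nonneg (y - z), sq_nonneg ‖z - x‖]
    rw [inner_coord h.hξ h.hζ h.h0] at hin
    have hq : |⟪y - x, ζ⟫| ≤ 2 * ε := by
      have := abs_real_inner_le_norm (y - x) ζ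
      rw [h.hζ, mul_one] at this
      linarith
    have hqs : ⟪y - x, ζ⟫ * ⟪z - x, ζ⟫ ≤ 2 * ⟪z - x, ξ⟫ ^ 2 := by
      calc ⟪y - x, ζ⟫ * ⟪z - x, ζ⟫ ≤ |⟪y - x, ζ⟫ * ⟪z - x, ζ⟫| := le_abs_self _
        _ = |⟪y - x, ζ⟫| * |⟪z - x, ζ⟫| := abs_mul _ _
        _ ≤ 2 * ε * |⟪z - x, ζ⟫| := by gcongr
        _ ≤ _ := by linarith
    have hpl : -(2 * ⟪z - x, ξ⟫) ≤ ⟪y - x, ξ⟫ := by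
      by_contra hc
      push Not at hc
      nlinarith
    rw [e, inner_sub_left, abs_le]
    constructor <;> linarith

lemma fiber (h : LocalSetup E ε x ξ ζ) {r : ℝ} (hr : GoodRad E ε x ξ ζ (ε / 4) r)
    {z₁ z₂ z : Plane} (h1 : z₁ ∉ eNbhd E ε) (h2 : z₂ ∉ eNbhd E ε)
    (ht1 : ⟪z₁ - x, ξ⟫ = ⟪z - x, ξ⟫) (ht2 : ⟪z₂ - x, ξ⟫ = ⟪z - x, ξ⟫)
    (ht0 : 0 < ⟪z - x, ξ⟫) (htr : ⟪z - x, ξ⟫ < r)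
    (hs1 : |⟪z₁ - x, ζ⟫| < ε) (hs2 : |⟪z₂ - x, ζ⟫| < ε)
    (hl : ⟪z₁ - x, ζ⟫ ≤ ⟪z - x, ζ⟫) (hu : ⟪z - x, ζ⟫ ≤ ⟪z₂ - x, ζ⟫) :
    z ∉ eNbhd E ε := by
  have hε := h.hε
  obtain ⟨hr0, -, hrε, hK⟩ := hr
  have c1 := h.cusp h1 hs1.le
  have c2 := h.cusp h2 hs2.le
  have a1 := h.abs_lt_of_cusp c1.le (by linarith) (by linarith)
  have a2 := h.abs_lt_of_cusp c2.le (by linarith) (by linarith)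
  rw [ht1] at c1 a1
  rw [ht2] at c2 a2
  have c3 : ε * |⟪z - x, ζ⟫| ≤ ⟪z - x, ξ⟫ ^ 2 := by
    have : |⟪z - x, ζ⟫| ≤ max |⟪z₁ - x, ζ⟫| |⟪z₂ - x, ζ⟫| := abs_le_max_abs_abs hl hu
    rcases le_max_iff.1 this with h3 | h3 <;> nlinarith
  rw [notMem_eNbhd h.hE h.hε]
  intro y hy
  by_contra hc
  push Not at hc
  have hp := hK z ht0 htr c3 y hy hc
  have coord : ∀ w : Plane, ⟪w - x, ξ⟫ = ⟪z - x, ξ⟫ →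
      ‖y - w‖ ^ 2 = ⟪y - z, ξ⟫ ^ 2 + (⟪y - x, ζ⟫ - ⟪w - x, ζ⟫) ^ 2 := by
    intro w hw
    have e : ∀ w, y - w = (y - x) - (w - x) := by intro w; abel
    rw [norm_coord h.hξ h.hζ h.h0, e w, inner_sub_left, hw, ← inner_sub_left, ← e,
      inner_sub_left _ _ ζ]
  have d0 := coord z rfl
  have d1 := coord z₁ ht1
  have d2 := coord z₂ ht2
  have u1 := (notMem_eNbhd h.hE h.hε).1 h1 y hy
  have u2 := (notMem_eNbhd h.hE h.hε).1 h2 y hy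
  have s0 : ‖y - z‖ ^ 2 ≤ ε ^ 2 := by gcongr
  have s1 : ε ^ 2 < ‖y - z₁‖ ^ 2 := by gcongr
  have s2 : ε ^ 2 < ‖y - z₂‖ ^ 2 := by gcongr
  have hge := le_of_frontier h.hx y hy
  have hyn := norm_coord h.hξ h.hζ h.h0 (y - x)
  have hge2 : ε ^ 2 ≤ ‖y - x‖ ^ 2 := by gcongr
  have hpx : |⟪y - x, ξ⟫| ≤ ε / 2 := by
    have e : y - x = (y - z) + (z - x) := by abel
    rw [e, inner_add_left]
    rw [abs_le] at hp ⊢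
    constructor <;> linarith
  have hpx2 : ⟪y - x, ξ⟫ ^ 2 ≤ (ε / 2) ^ 2 := by
    rw [← sq_abs ⟪y - x, ξ⟫]
    gcongr
  rw [abs_le] at a1 a2
  rcases le_or_gt 0 ⟪y - x, ζ⟫ with hq | hq
  · have : ε / 2 < ⟪y - x, ζ⟫ := by
      by_contra hc
      push Not at hc
      nlinarith
    have h5 := mul_nonneg (sub_nonneg.2 hu)
      (show 0 ≤ 2 * ⟪y - x, ζ⟫ - ⟪z - x, ζ⟫ - ⟪z₂ - x, ζ⟫ by linarith)
    linarith
  · have : ⟪y - x, ζ⟫ < -(ε / 2) := by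
      by_contra hc
      push Not at hc
      nlinarith
    have h5 := mul_nonneg (sub_nonneg.2 hl)
      (show 0 ≤ ⟪z - x, ζ⟫ + ⟪z₁ - x, ζ⟫ - 2 * ⟪y - x, ζ⟫ by linarith)
    linarith

lemma isOpenMap_proj (hξ : ‖ξ‖ = 1) : IsOpenMap (fun z : Plane => ⟪z - x, ξ⟫) := by
  have h1 : IsOpenMap (fun z : Plane => ⟪z, ξ⟫) := by
    have : Function.Surjective ((innerSL ℝ ξ : Plane →L[ℝ] ℝ) : Plane →ₗ[ℝ] ℝ) := by
      intro τ
      refine ⟨τ • ξ, ?_⟩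
      simp [hξ]
    have h2 := LinearMap.isOpenMap_of_finiteDimensional _ this
    convert h2 using 2 with z
    simp [real_inner_comm]
  exact h1.comp (isOpenMap_sub_right x)

lemma isOpen_boxW (a b : ℝ) : IsOpen (boxW E ε x ξ ζ a b) := by
  have h1 := isOpen_compl_eNbhd E ε
  have h2 : IsOpen {z : Plane | a < ⟪z - x, ξ⟫} := isOpen_lt continuous_const (by fun_prop)
  have h3 : IsOpen {z : Plane | ⟪z - x, ξ⟫ < b} := isOpen_lt (by fun_prop) continuous_const
  have h4 : IsOpen {z : Plane | |⟪z - x, ζ⟫| < ε} := isOpen_lt (by fun_prop) continuous_const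
  exact h1.inter ((h2.inter h3).inter h4)

lemma isOpen_projT (h : LocalSetup E ε x ξ ζ) : IsOpen (projT E ε x ξ ζ) := by
  have h1 := isOpen_compl_eNbhd E ε
  have h4 : IsOpen {z : Plane | |⟪z - x, ζ⟫| < ε} := isOpen_lt (by fun_prop) continuous_const
  have := isOpenMap_proj (x := x) h.hξ _ (h1.inter h4)
  convert this using 1
  ext τ
  constructor
  · rintro ⟨z, hz1, hz2, hz3⟩
    exact ⟨z, ⟨hz1, hz3⟩, hz2⟩
  · rintro ⟨z, ⟨hz1, hz3⟩, hz2⟩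
    exact ⟨z, hz1, hz2, hz3⟩

lemma isPreconnected_boxW (h : LocalSetup E ε x ξ ζ) {r : ℝ}
    (hr : GoodRad E ε x ξ ζ (ε / 4) r) {a b : ℝ} (ha : 0 ≤ a) (hb : b ≤ r)
    (hab : Ioo a b ⊆ projT E ε x ξ ζ) : IsPreconnected (boxW E ε x ξ ζ a b) := by
  intro u v hu hv hsub hnu hnv
  set W := boxW E ε x ξ ζ a b with hW
  have hop := isOpenMap_proj (x := x) h.hξ
  have hWo : IsOpen W := isOpen_boxW a b
  obtain ⟨τ, hτ, ⟨z₁, ⟨hz1W, hz1u⟩, e1⟩, ⟨z₂, ⟨hz2W, hz2v⟩, e2⟩⟩ :=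
    isPreconnected_Ioo (a := a) (b := b) _ _ (hop _ (hWo.inter hu)) (hop _ (hWo.inter hv))
      (by
        intro τ hτ
        obtain ⟨z, hz1, hz2, hz3⟩ := hab hτ
        have hzW : z ∈ W := ⟨hz1, by rw [hz2]; exact hτ, hz3⟩
        rcases hsub hzW with h' | h'
        · exact Or.inl ⟨z, ⟨hzW, h'⟩, hz2⟩
        · exact Or.inr ⟨z, ⟨hzW, h'⟩, hz2⟩)
      (by
        obtain ⟨z, hzW, hzu⟩ := hnu
        exact ⟨_, hzW.2.1, z, ⟨hzW, hzu⟩, rfl⟩)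
      (by
        obtain ⟨z, hzW, hzu⟩ := hnv
        exact ⟨_, hzW.2.1, z, ⟨hzW, hzu⟩, rfl⟩)
  simp only at e1 e2
  have hseg : segment ℝ z₁ z₂ ⊆ W := by
    rintro z ⟨α, β, hα, hβ, hαβ, rfl⟩
    have hα' : α = 1 - β := by linarith
    have e : α • z₁ + β • z₂ - x = α • (z₁ - x) + β • (z₂ - x) := by
      rw [hα']; module
    have et : ⟪α • z₁ + β • z₂ - x, ξ⟫ = τ := by
      rw [e, inner_add_left, real_inner_smul_left, real_inner_smul_left, e1, e2, ← add_mul, hαβ,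
        one_mul]
    have es : ⟪α • z₁ + β • z₂ - x, ζ⟫ = α * ⟪z₁ - x, ζ⟫ + β * ⟪z₂ - x, ζ⟫ := by
      rw [e, inner_add_left, real_inner_smul_left, real_inner_smul_left]
    have hs1 := hz1W.2.2
    have hs2 := hz2W.2.2
    have hmid : |⟪α • z₁ + β • z₂ - x, ζ⟫| < ε := by
      rw [es]
      rw [abs_lt] at hs1 hs2 ⊢
      exact convex_Ioo (-ε) ε hs1 hs2 hα hβ hαβ
    refine ⟨?_, by rw [et]; exact hτ, hmid⟩
    have hτ0 : 0 < τ := by linarith [hτ.1]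
    have hτr : τ < r := by linarith [hτ.2]
    rcases le_total ⟪z₁ - x, ζ⟫ ⟪z₂ - x, ζ⟫ with hle | hle
    · apply h.fiber hr hz1W.1 hz2W.1 (by rw [et, e1]) (by rw [et, e2]) (by rwa [et])
        (by rwa [et]) hs1 hs2
      · rw [es, hα']; nlinarith
      · rw [es, hα']; nlinarith
    · apply h.fiber hr hz2W.1 hz1W.1 (by rw [et, e2]) (by rw [et, e1]) (by rwa [et])
        (by rwa [et]) hs2 hs1
      · rw [es, hα']; nlinarith
      · rw [es, hα']; nlinarith
  obtain ⟨z, hz, hzuv⟩ := (convex_segment z₁ z₂).isPreconnected u v hu hv (hseg.trans hsub)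
    ⟨z₁, left_mem_segment ℝ z₁ z₂, hz1u⟩ ⟨z₂, right_mem_segment ℝ z₁ z₂, hz2v⟩
  exact ⟨z, hseg hz, hzuv⟩

lemma accum (h : LocalSetup E ε x ξ ζ) :
    ∃ u : ℕ → Plane, Tendsto u atTop (nhds x) ∧
      ∀ n, u n ∉ eNbhd E ε ∧ 0 < ⟪u n - x, ξ⟫ := by
  obtain ⟨-, u, hu, hux, hud⟩ := h.hout
  have h1 : Tendsto (fun n => ⟪(‖u n - x‖)⁻¹ • (u n - x), ξ⟫) atTop (nhds ⟪ξ, ξ⟫) :=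
    Tendsto.inner hud tendsto_const_nhds
  rw [real_inner_self_eq_norm_sq, h.hξ] at h1
  have h2 := h1.eventually (lt_mem_nhds (show (0 : ℝ) < 1 ^ 2 by norm_num))
  obtain ⟨N, hN⟩ := eventually_atTop.1 h2
  refine ⟨fun n => u (n + N), (tendsto_add_atTop_iff_nat N).2 hux, fun n => ⟨hu _, ?_⟩⟩
  have := hN (n + N) (by omega)
  rw [real_inner_smul_left] at this
  by_contra hc
  push Not at hc
  have h3 : 0 ≤ (‖u (n + N) - x‖)⁻¹ := by positivity
  nlinarith

lemma abs_zeta_lt {r : ℝ} (hζ : ‖ζ‖ = 1) {z : Plane} (hz : z ∈ ball x r) :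
    |⟪z - x, ζ⟫| < r := by
  rw [mem_ball, dist_eq_norm] at hz
  have := abs_real_inner_le_norm (z - x) ζ
  rw [hζ, mul_one] at this
  linarith

lemma sharp (h : LocalSetup E ε x ξ ζ) {ρ : ℝ} (hρ : 0 < ρ)
    (hT : Ioo 0 ρ ⊆ projT E ε x ξ ζ) : SharpType E ε x ξ := by
  have hε := h.hε
  obtain ⟨r, hr⟩ := h.exists_goodRad (η := ε / 4) (by linarith)
  set r' := min ρ r with hr'
  have hr'0 : 0 < r' := lt_min hρ hr.1
  have hr'ε : r' ≤ ε / 4 := (min_le_right _ _).trans hr.2.2.1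
  have hconn := h.isPreconnected_boxW hr le_rfl (min_le_right ρ r)
    ((Ioo_subset_Ioo_right (min_le_left ρ r)).trans hT)
  have hsub : (eNbhd E ε)ᶜ ∩ halfBall x ξ r' ⊆ boxW E ε x ξ ζ 0 r' := by
    rintro z ⟨hz, hzb, hz0⟩
    refine ⟨hz, ⟨hz0, ?_⟩, ?_⟩
    · exact (le_abs_self _).trans_lt (abs_zeta_lt h.hξ hzb)
    · have := abs_zeta_lt h.hζ hzb
      linarith
  obtain ⟨u, hux, hu⟩ := h.accum
  have hev : ∀ᶠ n in atTop, u n ∈ (eNbhd E ε)ᶜ ∩ halfBall x ξ r' := by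
    filter_upwards [hux.eventually (ball_mem_nhds x hr'0)] with n hn
    exact ⟨(hu n).1, hn, (hu n).2⟩
  obtain ⟨n0, hn0⟩ := hev.exists
  have hWV : boxW E ε x ξ ζ 0 r' ⊆ connectedComponentIn (eNbhd E ε)ᶜ (u n0) :=
    hconn.subset_connectedComponentIn (hsub hn0) (fun z hz => hz.1)
  have hVU := connectedComponentIn_subset (eNbhd E ε)ᶜ (u n0)
  refine ⟨r', hr'0, _, ⟨u n0, (hu n0).1, rfl⟩, ?_, ?_, ?_⟩
  · refine ⟨mem_closure_of_tendsto hux (hev.mono fun n hn => hWV (hsub hn)), fun hi => ?_⟩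
    have h1 := hVU (interior_subset hi)
    have h2 : IsClosed (eNbhd E ε) := isClosed_closure
    exact h1 (h2.frontier_subset h.hx)
  · apply Subset.antisymm
    · exact fun z hz => ⟨hWV (hsub hz), hz.2⟩
    · exact fun z hz => ⟨hVU hz.1, hz.2⟩
  · rintro W ⟨w, hw, rfl⟩ ⟨z, hz, hzb⟩
    have hzU := connectedComponentIn_subset _ _ hz
    have hzV := hWV (hsub ⟨hzU, hzb⟩)
    rw [connectedComponentIn_eq hz, connectedComponentIn_eq hzV]

end LocalSetup

namespace LocalSetup

variable {E : Set Plane} {ε : ℝ} {x ξ ζ : Plane}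

lemma GoodRad_mono {η η' r : ℝ} (hη : η ≤ η') (h : GoodRad E ε x ξ ζ η r) :
    GoodRad E ε x ξ ζ η' r :=
  ⟨h.1, h.2.1.trans hη, h.2.2.1, fun z h1 h2 h3 y hy hyz => (h.2.2.2 z h1 h2 h3 y hy hyz).trans hη⟩

/-- A boundary point over an endpoint outside the projection has contributors on the upper side. -/
lemma exists_upper {E : Set Plane} (hE : IsCompact E) {ε : ℝ} (hε : 0 < ε) {u : Plane}
    (hu : u ∈ frontier (eNbhd E ε)) {x ξ ζ : Plane} (h0 : ⟪ζ, ξ⟫ = 0)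
    (hq : ∀ y ∈ contributors E ε u, ⟪y - u, ζ⟫ ≠ 0)
    (hs : |⟪u - x, ζ⟫| < ε)
    (hT : ∀ z, ⟪z - x, ξ⟫ = ⟪u - x, ξ⟫ → |⟪z - x, ζ⟫| < ε → z ∈ eNbhd E ε) :
    ∃ y ∈ contributors E ε u, 0 < ⟪y - u, ζ⟫ := by
  by_contra hc
  push Not at hc
  obtain ⟨δ₀, hδ₀, h⟩ := strict_polar hE hε hu (v := ζ)
    (fun y hy => lt_of_le_of_ne (hc y hy) (hq y hy))
  have h1 : Tendsto (fun δ : ℝ => |⟪u + δ • ζ - x, ζ⟫|) (𝓝[>] 0) (nhds |⟪u - x, ζ⟫|) := by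
    have : Continuous (fun δ : ℝ => |⟪u + δ • ζ - x, ζ⟫|) := by fun_prop
    have h2 := this.tendsto 0
    simp only [zero_smul, add_zero] at h2
    exact h2.mono_left nhdsWithin_le_nhds
  have h2 := h1.eventually (gt_mem_nhds hs)
  have h3 : ∀ᶠ δ : ℝ in 𝓝[>] 0, δ ∈ Ioo 0 δ₀ := Ioo_mem_nhdsGT hδ₀
  obtain ⟨δ, hδ1, hδ2⟩ := (h2.and h3).exists
  refine h δ hδ2.1 hδ2.2 (hT _ ?_ hδ1)
  have e : u + δ • ζ - x = (u - x) + δ • ζ := by abel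
  rw [e, inner_add_left, real_inner_smul_left, h0, mul_zero, add_zero]

lemma chain_step (h : LocalSetup E ε x ξ ζ)
    (hT : ∀ ρ : ℝ, 0 < ρ → ∃ τ, 0 < τ ∧ τ < ρ ∧ τ ∉ projT E ε x ξ ζ) {δ : ℝ} (hδ : 0 < δ) :
    ∃ (a b : ℝ) (V : Set Plane) (u y y' : Plane), 0 < a ∧ b ≤ δ ∧ IsCompOfCompl E ε V ∧
      (∀ z ∈ V, a < ⟪z - x, ξ⟫ ∧ ⟪z - x, ξ⟫ < b ∧ ‖z - x‖ < ε ∧ ‖z - x‖ ≤ 2 * δ) ∧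
      u ∈ frontier V ∧ ‖u - x‖ ≤ 2 * δ ∧ IsSingularity E ε u ∧ extContrib E ε u = {y, y'} ∧
      -1 ≤ ⟪ε⁻¹ • (y - u), ε⁻¹ • (y' - u)⟫ ∧ ⟪ε⁻¹ • (y - u), ε⁻¹ • (y' - u)⟫ ≤ -1 + δ := by
  have hε := h.hε
  have hζξ : ⟪ζ, ξ⟫ = 0 := by rw [real_inner_comm]; exact h.h0
  -- choice of the radius
  set η := min (min (ε / 4) (ε * δ / 2)) δ with hη
  have hη0 : 0 < η := by positivity
  have hη1 : η ≤ ε / 4 := (min_le_left _ _).trans (min_le_left _ _)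
  have hη2 : η ≤ ε * δ / 2 := (min_le_left _ _).trans (min_le_right _ _)
  have hη3 : η ≤ δ := min_le_right _ _
  obtain ⟨r, hr⟩ := h.exists_goodRad hη0
  have hr4 := GoodRad_mono hη1 hr
  obtain ⟨hr0, hrη, hrε, hK⟩ := hr
  -- the component interval
  obtain ⟨t₀, ht00, ht0r, ht0T⟩ := hT r hr0
  obtain ⟨z₀, hz0U, hz0pos, hz0t, hz0s⟩ : ∃ z, z ∉ eNbhd E ε ∧ 0 < ⟪z - x, ξ⟫ ∧
      ⟪z - x, ξ⟫ < t₀ ∧ |⟪z - x, ζ⟫| < ε := by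
    obtain ⟨w, hwx, hw⟩ := h.accum
    obtain ⟨n, hn⟩ := (hwx.eventually (ball_mem_nhds x ht00)).exists
    refine ⟨w n, (hw n).1, (hw n).2, (le_abs_self _).trans_lt (abs_zeta_lt h.hξ hn), ?_⟩
    have := abs_zeta_lt h.hζ hn
    linarith
  set t := ⟪z₀ - x, ξ⟫ with ht
  have htT : t ∈ projT E ε x ξ ζ := ⟨z₀, hz0U, rfl, hz0s⟩
  obtain ⟨t₁, ht10, ht1t, ht1T⟩ := hT t hz0pos
  have hTc : IsClosed (projT E ε x ξ ζ)ᶜ := h.isOpen_projT.isClosed_compl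
  obtain ⟨a, ⟨haI, haT⟩, hamax⟩ := (isCompact_Icc.inter_right hTc).exists_isGreatest
    (⟨t₁, ⟨le_rfl, ht1t.le⟩, ht1T⟩ : (Icc t₁ t ∩ (projT E ε x ξ ζ)ᶜ).Nonempty)
  obtain ⟨b, ⟨hbI, hbT⟩, hbmin⟩ := (isCompact_Icc.inter_right hTc).exists_isLeast
    (⟨t₀, ⟨hz0t.le, le_rfl⟩, ht0T⟩ : (Icc t t₀ ∩ (projT E ε x ξ ζ)ᶜ).Nonempty)
  have ha0 : 0 < a := lt_of_lt_of_le ht10 haI.1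
  have hat : a < t := lt_of_le_of_ne haI.2 (fun e => haT (e ▸ htT))
  have htb : t < b := lt_of_le_of_ne hbI.1 (fun e => hbT (e ▸ htT))
  have hbr : b < r := lt_of_le_of_lt hbI.2 ht0r
  have hIT : Ioo a b ⊆ projT E ε x ξ ζ := by
    intro τ hτ
    by_contra hc
    rcases le_total τ t with hle | hle
    · have : τ ≤ a := hamax ⟨⟨haI.1.trans hτ.1.le, hle⟩, hc⟩
      linarith [hτ.1]
    · have : b ≤ τ := hbmin ⟨⟨hle, hτ.2.le.trans hbI.2⟩, hc⟩
      linarith [hτ.2]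
  have hconn := h.isPreconnected_boxW hr4 ha0.le hbr.le hIT
  set U := (eNbhd E ε)ᶜ with hU
  have hUo : IsOpen U := isOpen_compl_eNbhd E ε
  set V := connectedComponentIn U z₀ with hV
  have hz0V : z₀ ∈ V := mem_connectedComponentIn hz0U
  have hVU : V ⊆ U := connectedComponentIn_subset _ _
  have hVo : IsOpen V := hUo.connectedComponentIn
  have hWV : boxW E ε x ξ ζ a b ⊆ V :=
    hconn.subset_connectedComponentIn ⟨hz0U, ⟨hat, htb⟩, hz0s⟩ (fun z hz => hz.1)
  have hVW : V ⊆ {z | (a < ⟪z - x, ξ⟫ ∧ ⟪z - x, ξ⟫ < b) ∧ |⟪z - x, ζ⟫| < ε} := by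
    have h1 : IsOpen {z : Plane | a < ⟪z - x, ξ⟫} := isOpen_lt continuous_const (by fun_prop)
    have h2 : IsOpen {z : Plane | ⟪z - x, ξ⟫ < b} := isOpen_lt (by fun_prop) continuous_const
    have h3 : IsOpen {z : Plane | |⟪z - x, ζ⟫| < ε} := isOpen_lt (by fun_prop) continuous_const
    have h4 : IsOpen {z : Plane | ⟪z - x, ξ⟫ < a} := isOpen_lt (by fun_prop) continuous_const
    have h5 : IsOpen {z : Plane | b < ⟪z - x, ξ⟫} := isOpen_lt continuous_const (by fun_prop)
    have h6 : IsOpen {z : Plane | ε < |⟪z - x, ζ⟫|} := isOpen_lt continuous_const (by fun_prop)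
    apply IsPreconnected.subset_left_of_subset_union ((h1.inter h2).inter h3)
      ((h4.union h5).union h6)
    · rw [Set.disjoint_left]
      rintro z ⟨⟨k1, k2⟩, k3⟩ ((k4 | k4) | k4)
      · exact lt_asymm (show a < ⟪z - x, ξ⟫ from k1) k4
      · exact lt_asymm (show ⟪z - x, ξ⟫ < b from k2) k4
      · exact lt_asymm (show |⟪z - x, ζ⟫| < ε from k3) k4
    · intro z hz
      have hzU : z ∉ eNbhd E ε := hVU hz
      by_cases k4 : ⟪z - x, ξ⟫ < a
      · exact Or.inr (Or.inl (Or.inl k4))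
      by_cases k5 : b < ⟪z - x, ξ⟫
      · exact Or.inr (Or.inl (Or.inr k5))
      by_cases k6 : ε < |⟪z - x, ζ⟫|
      · exact Or.inr (Or.inr k6)
      push Not at k4 k5 k6
      have hc := h.cusp hzU k6
      have k7 := h.abs_lt_of_cusp hc.le (by linarith) (by linarith)
      have k8 : |⟪z - x, ζ⟫| < ε := by linarith
      refine Or.inl ⟨⟨lt_of_le_of_ne k4 ?_, lt_of_le_of_ne k5 ?_⟩, k8⟩
      · intro e
        exact haT ⟨z, hzU, e.symm, k8⟩
      · intro e
        exact hbT ⟨z, hzU, e, k8⟩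
    · exact ⟨z₀, hz0V, ⟨hat, htb⟩, hz0s⟩
    · exact isPreconnected_connectedComponentIn
  have hVc : ∀ z ∈ V, ε * |⟪z - x, ζ⟫| ≤ ⟪z - x, ξ⟫ ^ 2 := fun z hz =>
    (h.cusp (hVU hz) (hVW hz).2.le).le
  have hVn : ∀ z ∈ V, ‖z - x‖ ≤ 2 * ⟪z - x, ξ⟫ := by
    intro z hz
    have := (hVW hz).1
    exact h.norm_le_of_cusp (hVc z hz) (by linarith [this.1]) (by linarith [this.2])
  -- the boundary point
  have hVb : Bornology.IsBounded V := by
    refine (isBounded_closedBall (x := x) (r := 2 * b)).subset ?_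
    intro z hz
    rw [mem_closedBall, dist_eq_norm]
    have := hVn z hz
    have := (hVW hz).1.2
    linarith
  have hVcomp : IsCompact (closure V) := hVb.isCompact_closure
  obtain ⟨u, huV, hub⟩ : ∃ u ∈ closure V, ⟪u - x, ξ⟫ = b := by
    have hcl : IsClosed ((fun z : Plane => ⟪z - x, ξ⟫) '' closure V) :=
      (hVcomp.image (by fun_prop)).isClosed
    have hsub : Ioo a b ⊆ (fun z : Plane => ⟪z - x, ξ⟫) '' closure V := by
      intro τ hτ
      obtain ⟨z, hz1, hz2, hz3⟩ := hIT hτ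
      exact ⟨z, subset_closure (hWV ⟨hz1, by rw [hz2]; exact hτ, hz3⟩), hz2⟩
    have hbc : b ∈ closure (Ioo a b) := by
      rw [closure_Ioo (by linarith)]
      exact ⟨by linarith, le_rfl⟩
    exact hcl.closure_subset_iff.2 hsub hbc
  have huc : ε * |⟪u - x, ζ⟫| ≤ ⟪u - x, ξ⟫ ^ 2 := by
    have hcl : IsClosed {z : Plane | ε * |⟪z - x, ζ⟫| ≤ ⟪z - x, ξ⟫ ^ 2} :=
      isClosed_le (by fun_prop) (by fun_prop)
    exact hcl.closure_subset_iff.2 hVc huV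
  have hb0 : 0 < b := by linarith
  have hus := h.abs_lt_of_cusp huc (by linarith) (by linarith)
  have hun := h.norm_le_of_cusp huc (by linarith) (by linarith)
  rw [hub] at hus hun
  have huN : u ∈ eNbhd E ε := by
    by_contra hc
    exact hbT ⟨u, hc, hub, by linarith⟩
  have huVf : u ∈ frontier V := ⟨huV, fun hi => hVU (interior_subset hi) huN⟩
  have huf : u ∈ frontier (eNbhd E ε) := by
    rw [frontier_eq_closure_inter_closure]
    exact ⟨subset_closure huN, closure_mono hVU huV⟩
  -- contributors at `u`
  have hcp : ∀ y ∈ contributors E ε u, |⟪y - u, ξ⟫| ≤ η := by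
    intro y hy
    have := (mem_contributors h.hE hε huf).1 hy
    exact hK u (by linarith) (by linarith) huc y this.1 this.2.le
  have hcq2 : ∀ y ∈ contributors E ε u, ε ^ 2 - η ^ 2 ≤ |⟪y - u, ζ⟫| ^ 2 := by
    intro y hy
    have h1 := norm_coord h.hξ h.hζ h.h0 (y - u)
    rw [hy.2] at h1
    have h2 : |⟪y - u, ξ⟫| ^ 2 ≤ η ^ 2 := by
      have := hcp y hy
      gcongr
    rw [sq_abs] at h2 ⊢
    linarith
  have hcq : ∀ y ∈ contributors E ε u, ε / 4 ≤ |⟪y - u, ζ⟫| := by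
    intro y hy
    have h1 := hcq2 y hy
    have h2 := abs_nonneg ⟪y - u, ζ⟫
    by_contra hc
    push Not at hc
    nlinarith
  have hq0 : ∀ y ∈ contributors E ε u, ⟪y - u, ζ⟫ ≠ 0 := by
    intro y hy e
    have := hcq y hy
    rw [e, abs_zero] at this
    linarith
  have hTu : ∀ z, ⟪z - x, ξ⟫ = ⟪u - x, ξ⟫ → |⟪z - x, ζ⟫| < ε → z ∈ eNbhd E ε := by
    intro z hz1 hz2
    by_contra hc
    exact hbT ⟨z, hc, hz1.trans hub, hz2⟩
  have hup := exists_upper h.hE hε huf (x := x) hζξ hq0 (by linarith) hTu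
  have hlo := exists_upper h.hE hε huf (x := x) (ξ := ξ) (ζ := -ζ)
    (by rw [inner_neg_left, hζξ, neg_zero])
    (fun y hy => by rw [inner_neg_right]; exact neg_ne_zero.2 (hq0 y hy))
    (by rw [inner_neg_right, abs_neg]; linarith)
    (fun z hz1 hz2 => hTu z hz1 (by rwa [inner_neg_right, abs_neg] at hz2))
  have hout : ∃ η ∈ outwardDirs E ε u, ⟪η, ξ⟫ ≤ 0 := by
    obtain ⟨z, hzV, hzu⟩ := mem_closure_iff_seq_limit.1 huV
    refine exists_outward z (fun n => hVU (hzV n)) ?_ hzu ?_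
    · intro n e
      exact hVU (hzV n) (e ▸ huN)
    · intro n
      have e : z n - u = (z n - x) - (u - x) := by abel
      rw [e, inner_sub_left, hub]
      linarith [(hVW (hzV n)).1.2]
  have hup' : ∃ y ∈ contributors E ε u, ⟪y - u, -ζ⟫ < 0 := by
    obtain ⟨y, hy, hy'⟩ := hup
    exact ⟨y, hy, by rw [inner_neg_right]; linarith⟩
  have hlo' : ∃ y ∈ contributors E ε u, ⟪y - u, ζ⟫ < 0 := by
    obtain ⟨y, hy, hy'⟩ := hlo
    exact ⟨y, hy, by rw [inner_neg_right] at hy'; linarith⟩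
  obtain ⟨p, hpC, hpq, hpu⟩ := upper_ext h.hE hε huf h.hξ h.hζ h.h0 (c := ε / 4)
    (by linarith) hcq hup hlo' hout
  obtain ⟨q, hqC, hqq, hqu⟩ := upper_ext h.hE hε huf h.hξ (ζ := -ζ) (by rw [norm_neg, h.hζ])
    (by rw [inner_neg_right, h.h0, neg_zero]) (c := ε / 4)
    (by linarith) (fun y hy => by rw [inner_neg_right, abs_neg]; exact hcq y hy) hlo hup' hout
  rw [inner_neg_right] at hqq
  have hpp := hcp p hpC.1
  have hqp := hcp q hqC.1
  have hp2 := hcq2 p hpC.1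
  have hq2 := hcq2 q hqC.1
  refine ⟨a, b, V, u, p, q, ha0, by linarith, ⟨z₀, hz0U, rfl⟩, ?_, huVf, by linarith,
    ⟨huf, ?_⟩, ?_, ?_, ?_⟩
  · intro z hz
    have h1 := hVn z hz
    have h2 := hVW hz
    exact ⟨h2.1.1, h2.1.2, by linarith [h2.1.2], by linarith [h2.1.2]⟩
  · rintro ⟨⟨-, w, hw⟩, -⟩
    have h1 := hpC.1
    have h2 := hqC.1
    rw [hw, mem_singleton_iff] at h1 h2
    rw [h1] at hpq
    rw [h2] at hqq
    linarith
  · apply Subset.antisymm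
    · intro y hy
      rcases lt_or_gt_of_ne (hq0 y hy.1) with hlt | hgt
      · exact Or.inr (hqu y hy (by rw [inner_neg_right]; linarith))
      · exact Or.inl (hpu y hy hgt)
    · rintro y (rfl | rfl)
      · exact hpC
      · exact hqC
  · have hn : ∀ w ∈ contributors E ε u, ‖ε⁻¹ • (w - u)‖ = 1 := by
      intro w hw
      rw [norm_smul, hw.2, norm_inv, Real.norm_of_nonneg hε.le, inv_mul_cancel₀ hε.ne']
    have := abs_real_inner_le_norm (ε⁻¹ • (p - u)) (ε⁻¹ • (q - u))
    rw [hn p hpC.1, hn q hqC.1, mul_one] at this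
    exact (abs_le.1 this).1
  · rw [real_inner_smul_left, real_inner_smul_right, inner_coord h.hξ h.hζ h.h0]
    have k1 : ⟪p - u, ξ⟫ * ⟪q - u, ξ⟫ ≤ η ^ 2 := by
      calc _ ≤ |⟪p - u, ξ⟫ * ⟪q - u, ξ⟫| := le_abs_self _
        _ = |⟪p - u, ξ⟫| * |⟪q - u, ξ⟫| := abs_mul _ _
        _ ≤ η * η := by gcongr
        _ = _ := by ring
    have k2 : ⟪p - u, ζ⟫ * ⟪q - u, ζ⟫ ≤ -(ε ^ 2 - η ^ 2) := by
      have e : ⟪p - u, ζ⟫ * ⟪q - u, ζ⟫ = -(|⟪p - u, ζ⟫| * |⟪q - u, ζ⟫|) := by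
        rw [abs_of_pos hpq, abs_of_neg (by linarith : ⟪q - u, ζ⟫ < 0)]
        ring
      rw [e]
      apply neg_le_neg
      have h3 : 0 ≤ ε ^ 2 - η ^ 2 := by nlinarith
      apply le_of_sq_le_sq _ (by positivity)
      rw [mul_pow, sq (ε ^ 2 - η ^ 2)]
      gcongr
    have k3 : ε⁻¹ * (ε⁻¹ * (⟪p - u, ξ⟫ * ⟪q - u, ξ⟫ + ⟪p - u, ζ⟫ * ⟪q - u, ζ⟫)) ≤
        ε⁻¹ * (ε⁻¹ * (2 * η ^ 2 - ε ^ 2)) := by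
      gcongr
      linarith
    refine k3.trans ?_
    rw [← mul_assoc, ← mul_inv, inv_mul_le_iff₀ (by positivity)]
    nlinarith

lemma chain (h : LocalSetup E ε x ξ ζ)
    (hT : ∀ ρ : ℝ, 0 < ρ → ∃ τ, 0 < τ ∧ τ < ρ ∧ τ ∉ projT E ε x ξ ζ) : ChainType E ε x ξ := by
  choose! a b V u y y' h1 h2 h3 h4 h5 h6 h7 h8 h9 h10 using
    fun (δ : ℝ) (hδ : 0 < δ) => h.chain_step hT hδ
  let D : ℕ → ℝ := fun n => Nat.rec 1 (fun k d => min (a d) (1 / ((k : ℝ) + 1))) n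
  have hDs : ∀ n, D (n + 1) = min (a (D n)) (1 / ((n : ℝ) + 1)) := fun n => rfl
  have hD0 : ∀ n, 0 < D n := by
    intro n
    induction n with
    | zero => exact one_pos
    | succ k ih =>
      rw [hDs]
      exact lt_min (h1 _ ih) Nat.one_div_pos_of_nat
  have hne : ∀ n, (V (D n)).Nonempty := by
    intro n
    obtain ⟨z, hz, e⟩ := h3 _ (hD0 n)
    exact ⟨z, e ▸ mem_connectedComponentIn hz⟩
  have hab : ∀ n, a (D n) < b (D n) := by
    intro n
    obtain ⟨z, hz⟩ := hne n
    have := h4 _ (hD0 n) z hz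
    linarith [this.1, this.2.1]
  have hDlim : Tendsto D atTop (nhds 0) := by
    rw [← tendsto_add_atTop_iff_nat 1]
    refine squeeze_zero (fun n => (hD0 (n + 1)).le) (fun n => ?_)
      (tendsto_one_div_add_atTop_nhds_zero_nat (𝕜 := ℝ))
    rw [hDs]
    exact min_le_right _ _
  have hD2 : Tendsto (fun n => 2 * D n) atTop (nhds 0) := by
    simpa using hDlim.const_mul 2
  have hstep : ∀ n, b (D (n + 1)) ≤ a (D n) := by
    intro n
    refine (h2 _ (hD0 (n + 1))).trans ?_
    rw [hDs]
    exact min_le_left _ _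
  have hanti : Antitone (fun n => a (D n)) :=
    antitone_nat_of_succ_le fun n => (hab (n + 1)).le.trans (hstep n)
  have hlt : ∀ m n, m < n → b (D n) ≤ a (D m) := by
    intro m n hmn
    obtain ⟨k, rfl⟩ : ∃ k, n = k + 1 := ⟨n - 1, by omega⟩
    exact (hstep k).trans (hanti (by omega : m ≤ k))
  have hdisj : ∀ m n, m < n → Disjoint (V (D m)) (V (D n)) := by
    intro m n hmn
    rw [Set.disjoint_left]
    intro z hzm hzn
    have k1 := h4 _ (hD0 m) z hzm
    have k2 := h4 _ (hD0 n) z hzn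
    have := hlt m n hmn
    linarith [k1.1, k2.2.1]
  refine ⟨ε, h.hε, fun n => V (D n), fun n => u (D n), fun n => h3 _ (hD0 n), ?_, ?_, ?_,
    fun n => h7 _ (hD0 n), fun n => h5 _ (hD0 n), ?_, fun n => y (D n), fun n => y' (D n),
    fun n => h8 _ (hD0 n), ?_⟩
  · intro m n hmn
    rcases lt_or_gt_of_ne hmn with hlt | hlt
    · exact hdisj m n hlt
    · exact (hdisj n m hlt).symm
  · intro n z hz
    have k := h4 _ (hD0 n) z hz
    refine ⟨by rw [mem_ball, dist_eq_norm]; exact k.2.2.1, ?_⟩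
    linarith [k.1, h1 _ (hD0 n)]
  · refine squeeze_zero (fun n => hausdorffDist_nonneg) (fun n => ?_) hD2
    have hd : ∀ z ∈ V (D n), dist z x ≤ 2 * D n := by
      intro z hz
      rw [dist_eq_norm]
      exact (h4 _ (hD0 n) z hz).2.2.2
    apply hausdorffDist_le_of_mem_dist (by linarith [hD0 n])
    · intro w hw
      obtain ⟨z, hz⟩ := hne n
      refine ⟨z, hz, ?_⟩
      rw [mem_singleton_iff.1 hw, dist_comm]
      exact hd z hz
    · intro z hz
      exact ⟨x, rfl, hd z hz⟩
  · rw [tendsto_iff_norm_sub_tendsto_zero]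
    exact squeeze_zero (fun n => norm_nonneg _) (fun n => h6 _ (hD0 n)) hD2
  · refine tendsto_of_tendsto_of_tendsto_of_le_of_le tendsto_const_nhds
      (by simpa using hDlim.const_add (-1)) (fun n => h9 _ (hD0 n)) (fun n => h10 _ (hD0 n))

end LocalSetup

lemma not_sharp_and_chain {E : Set Plane} {ε : ℝ} {x ξ : Plane} :
    ¬ (SharpType E ε x ξ ∧ ChainType E ε x ξ) := by
  rintro ⟨⟨r, hr, V, -, -, -, hV⟩, ⟨r', -, Vs, -, hcomp, hdisj, hsub, hH, -⟩⟩
  have hne : ∀ n, (Vs n).Nonempty := by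
    intro n
    obtain ⟨z, hz, e⟩ := hcomp n
    exact ⟨z, e ▸ mem_connectedComponentIn hz⟩
  obtain ⟨N, hN⟩ := eventually_atTop.1 (hH.eventually (gt_mem_nhds hr))
  have key : ∀ n ≥ N, Vs n = V := by
    intro n hn
    apply hV _ (hcomp n)
    have hb : Bornology.IsBounded (Vs n) :=
      isBounded_ball.subset fun z hz => (hsub n hz).1
    obtain ⟨z, hz, hd⟩ := exists_dist_lt_of_hausdorffDist_lt (mem_singleton x) (hN n hn)
      (hausdorffEDist_ne_top_of_nonempty_of_bounded (singleton_nonempty x) (hne n)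
        Bornology.isBounded_singleton hb)
    refine ⟨z, hz, ?_, (hsub n hz).2⟩
    rw [mem_ball, dist_comm]
    exact hd
  have hd : Disjoint (Vs N) (Vs (N + 1)) := hdisj (show N ≠ N + 1 by omega)
  rw [key N le_rfl, key (N + 1) (by omega)] at hd
  have h1 := hne N
  rw [key N le_rfl] at h1
  obtain ⟨z, hz⟩ := h1
  exact Set.disjoint_left.1 hd hz hz

/-- Difference between sharp-type and chain-type geometry: at a boundary point whose two
extremal contributors are opposite, each extremal outward direction exhibits exactly one
of the two geometries. -/
theorem sharp_or_chain_type (E : Set Plane) (hE : IsCompact E) {ε : ℝ} (hε : 0 < ε)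
    (x : Plane) (hx : x ∈ frontier (eNbhd E ε)) (y₁ y₂ : Plane)
    (hcon : extContrib E ε x = {y₁, y₂}) (hopp : y₁ - x = -(y₂ - x)) (ξ : Plane)
    (hξ : ξ ∈ extOutward E ε x) :
    (SharpType E ε x ξ ∨ ChainType E ε x ξ) ∧
    ¬ (SharpType E ε x ξ ∧ ChainType E ε x ξ) := by
  refine ⟨?_, not_sharp_and_chain⟩
  obtain ⟨hξo, y, hy, hyξ⟩ := hξ
  have hy₂ : y₂ - x = -(y₁ - x) := by rw [hopp, neg_neg]
  have hyext : y ∈ extContrib E ε x := ⟨hy, ξ, hξo, hyξ⟩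
  have hperp : ⟪y₁ - x, ξ⟫ = 0 := by
    rw [hcon] at hyext
    rcases hyext with rfl | hyext
    · exact hyξ
    · rw [mem_singleton_iff.1 hyext, hy₂, inner_neg_left] at hyξ
      linarith
  have h1 : y₁ ∈ extContrib E ε x := by rw [hcon]; simp
  have h2 : y₂ ∈ extContrib E ε x := by rw [hcon]; simp
  have e1 := (mem_contributors hE hε hx).1 h1.1
  have e2 := (mem_contributors hE hε hx).1 h2.1
  have hs : ε • (ε⁻¹ • (y₁ - x)) = y₁ - x := smul_inv_smul₀ hε.ne' _
  have h : LocalSetup E ε x ξ (ε⁻¹ • (y₁ - x)) :=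
    { hE := hE
      hε := hε
      hx := hx
      hξ := hξo.1
      hζ := by rw [norm_smul, e1.2, norm_inv, Real.norm_of_nonneg hε.le, inv_mul_cancel₀ hε.ne']
      h0 := by rw [real_inner_smul_right, real_inner_comm, hperp, mul_zero]
      hp := by rw [hs, add_sub_cancel]; exact e1.1
      hm := by
        rw [hs, sub_eq_add_neg, ← hy₂, add_sub_cancel]
        exact e2.1
      hout := hξo }
  by_cases hT : ∃ ρ : ℝ, 0 < ρ ∧ Ioo 0 ρ ⊆ projT E ε x ξ (ε⁻¹ • (y₁ - x))
  · obtain ⟨ρ, hρ, hT⟩ := hT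
    exact Or.inl (h.sharp hρ hT)
  · right
    apply h.chain
    intro ρ hρ
    by_contra hc
    push Not at hc
    exact hT ⟨ρ, hρ, fun τ hτ => hc τ hτ.1 hτ.2⟩

end
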